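/- Let c > 0 and λ > 0, and let Ψ : ℝ² → ℂ be a smooth, doubly 2π-periodic, symmetric function with ∫|Ψ|³ dxdy = λ such that B_c(Ψ) ≤ B_c(u) for every smooth, doubly 2π-periodic, symmetric u : ℝ² → ℂ with ∫|u|³ dxdy = λ. Then there exist a constant C₁ > 0, a real number θ, and a smooth, doubly 2π-periodic, symmetric function φ : ℝ² → ℝ with φ(x,y) > 0 for all (x,y), such that Ψ = e^{iθ}φ and −Δφ + cφ = C₁ φ² on ℝ². -/

import Mathlib

/-! Minimality makes the quadratic form `Q(u) = ∫ |∇u|² + W|u|²` with `W = c - C₁|Ψ|` nonnegative on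
symmetric periodic functions (rescale `u` to the constraint and use Young's inequality
`3|Ψ||u|² ≤ |Ψ|³ + 2|u|³`), while `Q(Ψ) = 0`; hence `Q` vanishes on both `Re Ψ` and `Im Ψ`.

A real zero `a` of `Q` vanishes identically or nowhere: `Q(√(a² + ε²)) ≥ 0` says
`∫ |∇a|²/(a² + ε²) ≤ ∫ W` for every `ε > 0`, and this bound fails logarithmically as `ε → 0` if `a`
has a zero without vanishing identically.

Choosing the phase so that `Im Ψ` vanishes at the origin makes `Ψ` real and of one sign. Then `|Ψ|`,
and therefore `W`, is smooth, and the first variation of `Q` at `Ψ` is the differential equation. -/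

noncomputable section
open Real MeasureTheory Filter Complex

/-- doubly 2π-periodic (real-valued) -/
def DblPeriodic (u : ℝ → ℝ → ℝ) : Prop :=
  ∀ x y : ℝ, u (x + 2*π) y = u x y ∧ u x (y + 2*π) = u x y

/-- symmetric (real-valued) -/
def SymFun (u : ℝ → ℝ → ℝ) : Prop :=
  ∀ x y : ℝ, u (-x) y = u x y ∧ u x (-y) = u x y

/-- smooth (real-valued) -/
def Smooth2 (u : ℝ → ℝ → ℝ) : Prop :=
  ContDiff ℝ (⊤ : ℕ∞) fun p : ℝ × ℝ => u p.1 p.2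

/-- the Laplacian (real-valued) -/
def lap (u : ℝ → ℝ → ℝ) (x y : ℝ) : ℝ :=
  deriv (fun t => deriv (fun s => u s y) t) x + deriv (fun t => deriv (fun s => u x s) t) y

/-- doubly 2π-periodic (complex-valued) -/
def DblPeriodicC (u : ℝ → ℝ → ℂ) : Prop :=
  ∀ x y : ℝ, u (x + 2*π) y = u x y ∧ u x (y + 2*π) = u x y

/-- symmetric (complex-valued) -/
def SymFunC (u : ℝ → ℝ → ℂ) : Prop :=
  ∀ x y : ℝ, u (-x) y = u x y ∧ u x (-y) = u x y

/-- smooth (complex-valued) -/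
def Smooth2C (u : ℝ → ℝ → ℂ) : Prop :=
  ContDiff ℝ (⊤ : ℕ∞) fun p : ℝ × ℝ => u p.1 p.2

/-- integral over the fundamental square [0,2π] × [0,2π] -/
def integ2 (f : ℝ → ℝ → ℝ) : ℝ :=
  ∫ x in (0:ℝ)..(2*π), ∫ y in (0:ℝ)..(2*π), f x y

/-- the functional B_c(u) = (1/2)∫(|∇u|² + c|u|²) dxdy -/
def BcC (c : ℝ) (u : ℝ → ℝ → ℂ) : ℝ :=
  (1/2) * integ2 (fun x y =>
    ‖deriv (fun s => u s y) x‖^2 + ‖deriv (fun s => u x s) y‖^2 + c * ‖u x y‖^2)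

open Function (uncurry)
open scoped ContDiff Topology

section PartialDerivatives

variable {E : Type*} [NormedAddCommGroup E] [NormedSpace ℝ E]

/-- The partial derivative in the first variable. -/
def dx (u : ℝ → ℝ → E) (x y : ℝ) : E := deriv (fun s => u s y) x

/-- The partial derivative in the second variable. -/
def dy (u : ℝ → ℝ → E) (x y : ℝ) : E := deriv (fun s => u x s) y

variable {u : ℝ → ℝ → E} {n m : WithTop ℕ∞}

lemma hasDerivAt_line (hu : Differentiable ℝ (uncurry u)) (x y v w t : ℝ) :
    HasDerivAt (fun s => u (x + s * v) (y + s * w))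
      (fderiv ℝ (uncurry u) (x + t * v, y + t * w) (v, w)) t := by
  have line : HasDerivAt (fun s : ℝ => (x + s * v, y + s * w)) (v, w) t := by
    simpa using (((hasDerivAt_id t).mul_const v).const_add x).prodMk
      (((hasDerivAt_id t).mul_const w).const_add y)
  exact (hu _).hasFDerivAt.comp_hasDerivAt t line

lemma hasDerivAt_dx (hu : Differentiable ℝ (uncurry u)) (x y : ℝ) :
    HasDerivAt (fun s => u s y) (dx u x y) x :=
  ((hu (x, y)).comp x (f := fun s : ℝ => (s, y)) (by fun_prop)).hasDerivAt

lemma hasDerivAt_dy (hu : Differentiable ℝ (uncurry u)) (x y : ℝ) :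
    HasDerivAt (fun s => u x s) (dy u x y) y :=
  ((hu (x, y)).comp y (f := fun s : ℝ => (x, s)) (by fun_prop)).hasDerivAt

lemma fderiv_uncurry_apply (hu : Differentiable ℝ (uncurry u)) (x y v w : ℝ) :
    fderiv ℝ (uncurry u) (x, y) (v, w) = v • dx u x y + w • dy u x y := by
  have hx := (hasDerivAt_dx hu x y).unique (by simpa using hasDerivAt_line hu 0 y 1 0 x)
  have hy := (hasDerivAt_dy hu x y).unique (by simpa using hasDerivAt_line hu x 0 0 1 y)
  rw [hx, hy, ← map_smul, ← map_smul, ← map_add]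
  simp

lemma contDiff_uncurry_swap (hu : ContDiff ℝ n (uncurry u)) :
    ContDiff ℝ n (uncurry fun x y => u y x) :=
  hu.comp (contDiff_snd.prodMk contDiff_fst)

lemma contDiff_dx (hu : ContDiff ℝ n (uncurry u)) (hmn : m + 1 ≤ n) :
    ContDiff ℝ m (uncurry (dx u)) := by
  have hd : Differentiable ℝ (uncurry u) := hu.differentiable (by rintro rfl; simp at hmn)
  have h : uncurry (dx u) = fun p => fderiv ℝ (uncurry u) p (1, 0) :=
    funext fun (x, y) => by simp [fderiv_uncurry_apply hd]
  exact h ▸ (hu.fderiv_right hmn).clm_apply contDiff_const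

lemma contDiff_dy (hu : ContDiff ℝ n (uncurry u)) (hmn : m + 1 ≤ n) :
    ContDiff ℝ m (uncurry (dy u)) :=
  contDiff_uncurry_swap (contDiff_dx (contDiff_uncurry_swap hu) hmn)

@[fun_prop]
lemma continuous_dx (hu : ContDiff ℝ 1 (uncurry u)) {X : Type*} [TopologicalSpace X]
    {f g : X → ℝ} (hf : Continuous f) (hg : Continuous g) :
    Continuous fun p => dx u (f p) (g p) :=
  (contDiff_dx (m := 0) hu (by simp)).continuous.comp (hf.prodMk hg)

@[fun_prop]
lemma continuous_dy (hu : ContDiff ℝ 1 (uncurry u)) {X : Type*} [TopologicalSpace X]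
    {f g : X → ℝ} (hf : Continuous f) (hg : Continuous g) :
    Continuous fun p => dy u (f p) (g p) :=
  (contDiff_dy (m := 0) hu (by simp)).continuous.comp (hf.prodMk hg)

end PartialDerivatives

section PeriodSquare

variable {f g : ℝ → ℝ → ℝ}

lemma integrableOn_periodSquare (hf : Continuous (uncurry f)) :
    IntegrableOn (uncurry f) (Set.Ioc 0 (2 * π) ×ˢ Set.Ioc 0 (2 * π)) :=
  (hf.continuousOn.integrableOn_compact (isCompact_Icc.prod isCompact_Icc)).mono_set
    (Set.prod_mono Set.Ioc_subset_Icc_self Set.Ioc_subset_Icc_self)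

lemma integ2_eq_setIntegral (hf : Continuous (uncurry f)) :
    integ2 f = ∫ p in Set.Ioc 0 (2 * π) ×ˢ Set.Ioc 0 (2 * π), uncurry f p := by
  have h := integrableOn_periodSquare hf
  rw [Measure.volume_eq_prod] at h ⊢
  rw [setIntegral_prod _ h]
  simp only [integ2, intervalIntegral.integral_of_le two_pi_pos.le, Function.uncurry_apply_pair]

lemma integ2_swap (hf : Continuous (uncurry f)) : integ2 f = integ2 fun x y => f y x :=
  intervalIntegral_intervalIntegral_swap <| by
    simpa only [Set.uIoc_of_le two_pi_pos.le] using integrableOn_periodSquare hf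

lemma integ2_add (hf : Continuous (uncurry f)) (hg : Continuous (uncurry g)) :
    integ2 (fun x y => f x y + g x y) = integ2 f + integ2 g := by
  rw [integ2_eq_setIntegral hf, integ2_eq_setIntegral hg, integ2_eq_setIntegral (by fun_prop)]
  exact integral_add (integrableOn_periodSquare hf) (integrableOn_periodSquare hg)

lemma integ2_sub (hf : Continuous (uncurry f)) (hg : Continuous (uncurry g)) :
    integ2 (fun x y => f x y - g x y) = integ2 f - integ2 g := by
  rw [integ2_eq_setIntegral hf, integ2_eq_setIntegral hg, integ2_eq_setIntegral (by fun_prop)]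
  exact integral_sub (integrableOn_periodSquare hf) (integrableOn_periodSquare hg)

lemma integ2_const_mul (k : ℝ) (f : ℝ → ℝ → ℝ) :
    integ2 (fun x y => k * f x y) = k * integ2 f := by
  simp only [integ2, intervalIntegral.integral_const_mul]

lemma integ2_mono (hf : Continuous (uncurry f)) (hg : Continuous (uncurry g))
    (h : ∀ x y, f x y ≤ g x y) : integ2 f ≤ integ2 g := by
  rw [integ2_eq_setIntegral hf, integ2_eq_setIntegral hg]
  exact integral_mono (integrableOn_periodSquare hf) (integrableOn_periodSquare hg)
    fun p => h p.1 p.2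

lemma integ2_nonneg (h : ∀ x y, 0 ≤ f x y) : 0 ≤ integ2 f :=
  intervalIntegral.integral_nonneg two_pi_pos.le fun x _ =>
    intervalIntegral.integral_nonneg two_pi_pos.le fun y _ => h x y

lemma DblPeriodic.exists_mem_Ioc (hf : DblPeriodic f) (a b x y : ℝ) :
    ∃ x' ∈ Set.Ioc a (a + 2 * π), ∃ y' ∈ Set.Ioc b (b + 2 * π), f x y = f x' y' := by
  have hx : Function.Periodic (fun s => f s y) (2 * π) := fun s => (hf s y).1
  obtain ⟨x', hx', ex⟩ := hx.exists_mem_Ioc two_pi_pos x a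
  have hy : Function.Periodic (f x') (2 * π) := fun s => (hf x' s).2
  obtain ⟨y', hy', ey⟩ := hy.exists_mem_Ioc two_pi_pos y b
  exact ⟨x', hx', y', hy', ex.trans ey⟩

lemma DblPeriodic.eq_zero_of_integ2_eq_zero (hp : DblPeriodic f) (hf : Continuous (uncurry f))
    (h0 : ∀ x y, 0 ≤ f x y) (hi : integ2 f = 0) (x y : ℝ) : f x y = 0 := by
  have h0' (p : ℝ × ℝ) : 0 ≤ uncurry f p := h0 p.1 p.2
  rw [integ2_eq_setIntegral hf, setIntegral_eq_zero_iff_of_nonneg_ae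
    (Eventually.of_forall h0') (integrableOn_periodSquare hf)] at hi
  have hopen : Set.EqOn (uncurry f) 0 (Set.Ioo 0 (2 * π) ×ˢ Set.Ioo 0 (2 * π)) :=
    Measure.eqOn_open_of_ae_eq
      (ae_restrict_of_ae_restrict_of_subset
        (Set.prod_mono Set.Ioo_subset_Ioc_self Set.Ioo_subset_Ioc_self) hi)
      (isOpen_Ioo.prod isOpen_Ioo) hf.continuousOn continuousOn_const
  have hclosed := hopen.closure hf continuous_const
  rw [closure_prod_eq, closure_Ioo two_pi_pos.ne] at hclosed
  obtain ⟨x', hx', y', hy', e⟩ := hp.exists_mem_Ioc 0 0 x y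
  rw [zero_add] at hx' hy'
  exact e.trans (hclosed (x := (x', y'))
    ⟨Set.Ioc_subset_Icc_self hx', Set.Ioc_subset_Icc_self hy'⟩)

lemma integ2_dy (hf : ContDiff ℝ 1 (uncurry f)) (hp : DblPeriodic f) : integ2 (dy f) = 0 := by
  have h (x : ℝ) : ∫ y in (0 : ℝ)..(2 * π), dy f x y = 0 := by
    rw [intervalIntegral.integral_eq_sub_of_hasDerivAt
        (fun y _ => hasDerivAt_dy (hf.differentiable one_ne_zero) x y)
        (Continuous.intervalIntegrable (by fun_prop) _ _),
      ← zero_add (2 * π), (hp x 0).2, sub_self]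
  simp only [integ2, h, intervalIntegral.integral_zero]

lemma integ2_dx (hf : ContDiff ℝ 1 (uncurry f)) (hp : DblPeriodic f) : integ2 (dx f) = 0 := by
  rw [integ2_swap (by fun_prop)]
  exact integ2_dy (contDiff_uncurry_swap hf) fun x y => (hp y x).symm

lemma DblPeriodic.dx (h : DblPeriodic f) : DblPeriodic (dx f) := fun x y => by
  refine ⟨?_, by simp only [_root_.dx, (h _ _).2]⟩
  rw [_root_.dx, ← deriv_comp_add_const]
  simp only [(h _ _).1, _root_.dx]

lemma DblPeriodic.dy (h : DblPeriodic f) : DblPeriodic (dy f) := fun x y =>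
  have h' : DblPeriodic fun x y => f y x := fun x y => (h y x).symm
  (h'.dx y x).symm

end PeriodSquare

section LogarithmicGradient

lemma intervalIntegral_le_of_periodic {g : ℝ → ℝ} {a b T : ℝ} (hg : Function.Periodic g T)
    (hc : Continuous g) (h0 : ∀ x, 0 ≤ g x) (hab : a ≤ b) (hb : b ≤ a + T) :
    ∫ x in a..b, g x ≤ ∫ x in (0 : ℝ)..T, g x := by
  calc ∫ x in a..b, g x ≤ ∫ x in a..(a + T), g x :=
        intervalIntegral.integral_mono_interval le_rfl hab hb (Eventually.of_forall h0)
          (hc.intervalIntegrable _ _)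
    _ = ∫ x in (0 : ℝ)..T, g x := by simpa using hg.intervalIntegral_add_eq a 0

/-- Integration in polar-like coordinates `(t, m) ↦ (t, t * m)` over a fan of rays issuing from
`(p, q)`; the weight `t` is the Jacobian. -/
lemma integral_fan_le_integ2 {f : ℝ → ℝ → ℝ} (hf : Continuous (uncurry f)) (hp : DblPeriodic f)
    (h0 : ∀ x y, 0 ≤ f x y) (p q : ℝ) {δ T m₁ m₂ : ℝ} (hδ : 0 ≤ δ) (hδT : δ ≤ T)
    (hT : T ≤ 2 * π) (hm : m₁ ≤ m₂) (hmT : T * (m₂ - m₁) ≤ 2 * π) :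
    ∫ m in m₁..m₂, ∫ t in δ..T, t * f (p + t) (q + t * m) ≤ integ2 f := by
  have slice (t : ℝ) (ht : t ∈ Set.Icc δ T) :
      ∫ m in m₁..m₂, t * f (p + t) (q + t * m) ≤ ∫ y in (0 : ℝ)..(2 * π), f (p + t) y := by
    rw [intervalIntegral.integral_const_mul, intervalIntegral.mul_integral_comp_add_mul]
    refine intervalIntegral_le_of_periodic (fun y => (hp _ y).2) (by fun_prop) (h0 _) ?_ ?_
    · nlinarith [hδ.trans ht.1]
    · nlinarith [mul_le_mul_of_nonneg_right ht.2 (sub_nonneg.2 hm)]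
  have hF : Continuous fun x => ∫ y in (0 : ℝ)..(2 * π), f x y :=
    intervalIntegral.continuous_parametric_intervalIntegral_of_continuous' hf _ _
  calc ∫ m in m₁..m₂, ∫ t in δ..T, t * f (p + t) (q + t * m)
      = ∫ t in δ..T, ∫ m in m₁..m₂, t * f (p + t) (q + t * m) := by
        refine intervalIntegral_intervalIntegral_swap ?_
        refine (Continuous.continuousOn (by fun_prop)).integrableOn_compact
          (isCompact_uIcc.prod isCompact_uIcc) |>.mono_set
          (Set.prod_mono Set.uIoc_subset_uIcc Set.uIoc_subset_uIcc)
    _ ≤ ∫ t in δ..T, ∫ y in (0 : ℝ)..(2 * π), f (p + t) y :=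
        intervalIntegral.integral_mono_on hδT
          ((intervalIntegral.continuous_parametric_intervalIntegral_of_continuous'
            (by fun_prop) _ _).intervalIntegrable _ _)
          ((hF.comp (continuous_const_add p)).intervalIntegrable _ _) slice
    _ = ∫ x in (p + δ)..(p + T), ∫ y in (0 : ℝ)..(2 * π), f x y :=
        intervalIntegral.integral_comp_add_left (fun x => ∫ y in (0 : ℝ)..(2 * π), f x y) p
    _ ≤ integ2 f :=
        intervalIntegral_le_of_periodic (fun x => by simp only [(hp x _).1]) hF
          (fun x => intervalIntegral.integral_nonneg two_pi_pos.le fun y _ => h0 x y)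
          (by linarith) (by linarith)

lemma log_sq_add_sq_ratio_le {g g' : ℝ → ℝ} (hg : ∀ t, HasDerivAt g (g' t) t)
    (hg' : Continuous g') {δ T ε : ℝ} (hδ : 0 < δ) (hδT : δ ≤ T) (hε : ε ≠ 0) :
    Real.log ((g T ^ 2 + ε ^ 2) / (g δ ^ 2 + ε ^ 2)) ≤
      Real.log (T / δ) + ∫ t in δ..T, t * (g' t ^ 2 / (g t ^ 2 + ε ^ 2)) := by
  have hpos (t : ℝ) : 0 < g t ^ 2 + ε ^ 2 := by positivity
  have hgc : Continuous g := continuous_iff_continuousAt.2 fun t => (hg t).continuousAt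
  have hderiv (t : ℝ) :
      HasDerivAt (fun s => Real.log (g s ^ 2 + ε ^ 2)) (2 * g t * g' t / (g t ^ 2 + ε ^ 2)) t := by
    simpa using (((hg t).pow 2).add_const (ε ^ 2)).log (hpos t).ne'
  have hquad : Continuous fun t => t * (g' t ^ 2 / (g t ^ 2 + ε ^ 2)) := by
    fun_prop (disch := exact fun t => (hpos t).ne')
  have hlog : Continuous fun t => 2 * g t * g' t / (g t ^ 2 + ε ^ 2) := by
    fun_prop (disch := exact fun t => (hpos t).ne')
  have hinv : IntervalIntegrable (fun t : ℝ => t⁻¹) volume δ T :=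
    intervalIntegral.intervalIntegrable_inv
      (fun t ht => (hδ.trans_le (Set.uIcc_of_le hδT ▸ ht).1).ne') continuousOn_id
  have young (t : ℝ) (ht : t ∈ Set.Icc δ T) :
      2 * g t * g' t / (g t ^ 2 + ε ^ 2) ≤ t⁻¹ + t * (g' t ^ 2 / (g t ^ 2 + ε ^ 2)) := by
    have ht0 : 0 < t := hδ.trans_le ht.1
    have := hpos t
    rw [← sub_nonneg]
    have e : t⁻¹ + t * (g' t ^ 2 / (g t ^ 2 + ε ^ 2)) - 2 * g t * g' t / (g t ^ 2 + ε ^ 2) =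
        ((t * g' t - g t) ^ 2 + ε ^ 2) / (t * (g t ^ 2 + ε ^ 2)) := by
      field_simp
      ring
    rw [e]
    positivity
  calc Real.log ((g T ^ 2 + ε ^ 2) / (g δ ^ 2 + ε ^ 2))
      = ∫ t in δ..T, 2 * g t * g' t / (g t ^ 2 + ε ^ 2) := by
        rw [Real.log_div (hpos T).ne' (hpos δ).ne', intervalIntegral.integral_eq_sub_of_hasDerivAt
          (fun t _ => hderiv t) (hlog.intervalIntegrable _ _)]
    _ ≤ ∫ t in δ..T, (t⁻¹ + t * (g' t ^ 2 / (g t ^ 2 + ε ^ 2))) :=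
        intervalIntegral.integral_mono_on hδT (hlog.intervalIntegrable _ _)
          (hinv.add (hquad.intervalIntegrable _ _)) young
    _ = Real.log (T / δ) + ∫ t in δ..T, t * (g' t ^ 2 / (g t ^ 2 + ε ^ 2)) := by
        rw [intervalIntegral.integral_add hinv (hquad.intervalIntegrable _ _),
          integral_inv_of_pos hδ (hδ.trans_le hδT)]

/-- The regularised square `|∇a|² / (a² + ε²)` of the logarithmic gradient of `a`. -/
def logGradSq (ε : ℝ) (a : ℝ → ℝ → ℝ) (x y : ℝ) : ℝ :=
  (dx a x y ^ 2 + dy a x y ^ 2) / (a x y ^ 2 + ε ^ 2)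

variable {a : ℝ → ℝ → ℝ} {ε δ T : ℝ}

lemma logGradSq_nonneg (ε : ℝ) (a : ℝ → ℝ → ℝ) (x y : ℝ) : 0 ≤ logGradSq ε a x y := by
  unfold logGradSq
  positivity

lemma continuous_logGradSq (ha : ContDiff ℝ 1 (uncurry a)) (hε : ε ≠ 0) :
    Continuous (uncurry (logGradSq ε a)) := by
  have hpos (p : ℝ × ℝ) : a p.1 p.2 ^ 2 + ε ^ 2 ≠ 0 := by positivity
  unfold logGradSq
  fun_prop (disch := exact hpos)

lemma DblPeriodic.logGradSq (ha : DblPeriodic a) (ε : ℝ) : DblPeriodic (logGradSq ε a) :=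
  fun x y => by
    constructor <;>
    simp only [_root_.logGradSq, (ha x y).1, (ha x y).2, (ha.dx x y).1, (ha.dx x y).2,
      (ha.dy x y).1, (ha.dy x y).2]

lemma log_ratio_le_integral_ray (ha : ContDiff ℝ 1 (uncurry a)) (p q m : ℝ) (hδ : 0 < δ)
    (hδT : δ ≤ T) (hε : ε ≠ 0) :
    Real.log ((a (p + T) (q + T * m) ^ 2 + ε ^ 2) / (a (p + δ) (q + δ * m) ^ 2 + ε ^ 2)) ≤
      Real.log (T / δ) + (1 + m ^ 2) * ∫ t in δ..T, t * logGradSq ε a (p + t) (q + t * m) := by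
  have hd := ha.differentiable one_ne_zero
  have hray (t : ℝ) : HasDerivAt (fun t => a (p + t) (q + t * m))
      (dx a (p + t) (q + t * m) + m * dy a (p + t) (q + t * m)) t := by
    simpa [fderiv_uncurry_apply hd] using hasDerivAt_line hd p q 1 m t
  have hq : Continuous fun t => t * logGradSq ε a (p + t) (q + t * m) := by
    have := continuous_logGradSq ha hε
    fun_prop
  refine (log_sq_add_sq_ratio_le hray (by fun_prop) hδ hδT hε).trans (add_le_add_right ?_ _)
  rw [← intervalIntegral.integral_const_mul]
  refine intervalIntegral.integral_mono_on hδT (Continuous.intervalIntegrable ?_ _ _)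
    ((hq.const_mul _).intervalIntegrable _ _) fun t ht => ?_
  · have hpos (t : ℝ) : a (p + t) (q + t * m) ^ 2 + ε ^ 2 ≠ 0 := by positivity
    fun_prop (disch := exact hpos)
  have cauchySchwarz : (dx a (p + t) (q + t * m) + m * dy a (p + t) (q + t * m)) ^ 2 ≤
      (1 + m ^ 2) * (dx a (p + t) (q + t * m) ^ 2 + dy a (p + t) (q + t * m) ^ 2) := by
    nlinarith [sq_nonneg (m * dx a (p + t) (q + t * m) - dy a (p + t) (q + t * m))]
  have ht0 : 0 ≤ t := hδ.le.trans ht.1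
  rw [mul_left_comm, logGradSq, ← mul_div_assoc (1 + m ^ 2)]
  gcongr

lemma log_le_integral_ray {κ M R m : ℝ} (ha : ContDiff ℝ 1 (uncurry a)) (p q : ℝ) (hδ : 0 < δ)
    (hδT : δ ≤ T) (hκ : 0 < κ) (hR : |m| ≤ R) (hfar : κ ≤ |a (p + T) (q + T * m)|)
    (hnear : |a (p + δ) (q + δ * m)| ≤ M * δ) :
    Real.log (κ ^ 2 / ((M ^ 2 + 1) * T * δ)) ≤
      (1 + R ^ 2) * ∫ t in δ..T, t * logGradSq δ a (p + t) (q + t * m) := by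
  have hT : 0 < T := hδ.trans_le hδT
  have hratio : κ ^ 2 / ((M ^ 2 + 1) * δ ^ 2) ≤
      (a (p + T) (q + T * m) ^ 2 + δ ^ 2) / (a (p + δ) (q + δ * m) ^ 2 + δ ^ 2) := by
    have h₁ : κ ^ 2 ≤ a (p + T) (q + T * m) ^ 2 := by
      simpa only [sq_abs] using pow_le_pow_left₀ hκ.le hfar 2
    have h₂ : a (p + δ) (q + δ * m) ^ 2 ≤ (M * δ) ^ 2 := by
      simpa only [sq_abs] using pow_le_pow_left₀ (abs_nonneg _) hnear 2
    gcongr <;> nlinarith [sq_nonneg δ]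
  have hI : 0 ≤ ∫ t in δ..T, t * logGradSq δ a (p + t) (q + t * m) :=
    intervalIntegral.integral_nonneg hδT fun t ht =>
      mul_nonneg (hδ.le.trans ht.1) (logGradSq_nonneg _ _ _ _)
  have hslope : 1 + m ^ 2 ≤ 1 + R ^ 2 := by
    linarith [sq_le_sq.2 (hR.trans (le_abs_self R))]
  calc Real.log (κ ^ 2 / ((M ^ 2 + 1) * T * δ))
      = Real.log (κ ^ 2 / ((M ^ 2 + 1) * δ ^ 2)) - Real.log (T / δ) := by
        rw [← Real.log_div (by positivity) (by positivity)]
        congr 1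
        field_simp
    _ ≤ (1 + m ^ 2) * ∫ t in δ..T, t * logGradSq δ a (p + t) (q + t * m) := by
        linarith [Real.log_le_log (by positivity) hratio,
          log_ratio_le_integral_ray ha p q m hδ hδT hδ.ne']
    _ ≤ _ := mul_le_mul_of_nonneg_right hslope hI

lemma log_le_integ2_logGradSq {κ M R m₁ m₂ : ℝ} (ha : ContDiff ℝ 1 (uncurry a))
    (hp : DblPeriodic a) (p q : ℝ) (hδ : 0 < δ) (hδT : δ ≤ T) (hT : T ≤ 2 * π) (hm : m₁ ≤ m₂)
    (hmT : T * (m₂ - m₁) ≤ 2 * π) (hκ : 0 < κ) (hR : ∀ m ∈ Set.Icc m₁ m₂, |m| ≤ R)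
    (hfar : ∀ m ∈ Set.Icc m₁ m₂, κ ≤ |a (p + T) (q + T * m)|)
    (hnear : ∀ m ∈ Set.Icc m₁ m₂, |a (p + δ) (q + δ * m)| ≤ M * δ) :
    (m₂ - m₁) * Real.log (κ ^ 2 / ((M ^ 2 + 1) * T * δ)) ≤
      (1 + R ^ 2) * integ2 (logGradSq δ a) := by
  have hc := continuous_logGradSq ha hδ.ne'
  have hF : Continuous fun m => ∫ t in δ..T, t * logGradSq δ a (p + t) (q + t * m) :=
    intervalIntegral.continuous_parametric_intervalIntegral_of_continuous' (by fun_prop) _ _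
  calc (m₂ - m₁) * Real.log (κ ^ 2 / ((M ^ 2 + 1) * T * δ))
      = ∫ _ in m₁..m₂, Real.log (κ ^ 2 / ((M ^ 2 + 1) * T * δ)) := by simp
    _ ≤ ∫ m in m₁..m₂, (1 + R ^ 2) * ∫ t in δ..T, t * logGradSq δ a (p + t) (q + t * m) :=
        intervalIntegral.integral_mono_on hm intervalIntegrable_const
          ((hF.const_mul _).intervalIntegrable _ _) fun m h =>
          log_le_integral_ray ha p q hδ hδT hκ (hR m h) (hfar m h) (hnear m h)
    _ ≤ (1 + R ^ 2) * integ2 (logGradSq δ a) := by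
        rw [intervalIntegral.integral_const_mul]
        exact mul_le_mul_of_nonneg_left
          (integral_fan_le_integ2 hc (hp.logGradSq δ) (logGradSq_nonneg δ a) p q hδ.le hδT hT hm
            hmT) (by positivity)

lemma eventually_abs_ray_le {p q : ℝ} (ha : DifferentiableAt ℝ (uncurry a) (p, q))
    (h0 : a p q = 0) (R : ℝ) :
    ∃ M, ∀ᶠ δ in 𝓝[>] (0 : ℝ), ∀ m, |m| ≤ R → |a (p + δ) (q + δ * m)| ≤ M * δ := by
  obtain ⟨M, hM, hbound⟩ := ha.hasFDerivAt.isBigO_sub.exists_pos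
  obtain ⟨r, hr, hball⟩ := Metric.eventually_nhds_iff.1 hbound.bound
  refine ⟨M * (1 + |R|), ?_⟩
  filter_upwards [Ioo_mem_nhdsGT (show 0 < r / (1 + |R|) by positivity)] with δ hδ m hm
  have hm1 : max 1 |m| ≤ 1 + |R| :=
    max_le (by linarith [abs_nonneg R]) (by linarith [hm.trans (le_abs_self R)])
  have hdist : ‖((p + δ, q + δ * m) : ℝ × ℝ) - (p, q)‖ ≤ (1 + |R|) * δ := by
    rw [Prod.mk_sub_mk, add_sub_cancel_left, add_sub_cancel_left, Prod.norm_mk, norm_mul,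
      Real.norm_eq_abs, Real.norm_eq_abs, abs_of_pos hδ.1]
    calc max δ (δ * |m|) = max 1 |m| * δ := by
          rw [max_mul_of_nonneg _ _ hδ.1.le, one_mul, mul_comm]
      _ ≤ (1 + |R|) * δ := by gcongr; exact hδ.1.le
  have hlt : (1 + |R|) * δ < r := by
    rw [mul_comm]
    exact (lt_div_iff₀ (by positivity)).1 hδ.2
  have h := hball (y := (p + δ, q + δ * m)) (by rw [dist_eq_norm]; exact hdist.trans_lt hlt)
  simp only [Function.uncurry_apply_pair, h0, sub_zero, Real.norm_eq_abs] at h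
  calc |a (p + δ) (q + δ * m)| ≤ M * ((1 + |R|) * δ) :=
        h.trans (mul_le_mul_of_nonneg_left hdist hM.le)
    _ = M * (1 + |R|) * δ := by ring

lemma exists_fan_le_abs {p q m₀ w : ℝ} (ha : Continuous (uncurry a))
    (hne : a (p + T) (q + T * m₀) ≠ 0) (hw : 0 < w) :
    ∃ κ > 0, ∃ η > 0, η ≤ w ∧
      ∀ m ∈ Set.Icc (m₀ - η) (m₀ + η), κ ≤ |a (p + T) (q + T * m)| := by
  have hopen : ∀ᶠ m in 𝓝 m₀, |a (p + T) (q + T * m₀)| / 2 < |a (p + T) (q + T * m)| :=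
    ContinuousAt.eventually_lt (by fun_prop) (Continuous.continuousAt (by fun_prop))
      (half_lt_self (abs_pos.2 hne))
  obtain ⟨r, hr, hfar⟩ := Metric.nhds_basis_closedBall.eventually_iff.1 hopen
  refine ⟨_, half_pos (abs_pos.2 hne), min r w, lt_min hr hw, min_le_right _ _, fun m hm => ?_⟩
  rw [← Real.closedBall_eq_Icc] at hm
  exact (hfar (Metric.closedBall_subset_closedBall (min_le_left _ _) hm)).le

lemma tendsto_log_div_mul_atTop {b k : ℝ} (hb : 0 < b) (hk : 0 < k) :
    Tendsto (fun δ => Real.log (b / (k * δ))) (𝓝[>] 0) atTop := by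
  simp only [div_mul_eq_div_div]
  exact Real.tendsto_log_atTop.comp (tendsto_inv_nhdsGT_zero.const_mul_atTop (div_pos hb hk))

/-- Along each ray from a zero of `a`, the weighted integral of `logGradSq δ a` beyond distance `δ`
grows like `log (1 / δ)`, so a whole fan of rays makes `integ2 (logGradSq δ a)` unbounded. -/
theorem eq_zero_of_integ2_logGradSq_le {K p q : ℝ} (ha : ContDiff ℝ 1 (uncurry a))
    (hp : DblPeriodic a) (hK : ∀ ε > 0, integ2 (logGradSq ε a) ≤ K) (h0 : a p q = 0) (x y : ℝ) :
    a x y = 0 := by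
  obtain ⟨x', hx', y', -, e⟩ := hp.exists_mem_Ioc p q x y
  rw [e]
  by_contra hne
  obtain ⟨T, rfl⟩ : ∃ T, x' = p + T := ⟨x' - p, by ring⟩
  have hT : 0 < T := by linarith [hx'.1]
  obtain ⟨m₀, rfl⟩ : ∃ m, y' = q + T * m := ⟨(y' - q) / T, by field_simp; ring⟩
  obtain ⟨κ, hκ, η, hη, hηT, hfar⟩ := exists_fan_le_abs ha.continuous hne (div_pos pi_pos hT)
  set I := Set.Icc (m₀ - η) (m₀ + η)
  have hwidth : T * (m₀ + η - (m₀ - η)) ≤ 2 * π := by linarith [(le_div_iff₀ hT).1 hηT]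
  have hslope (m : ℝ) (hm : m ∈ I) : |m| ≤ |m₀| + η := by
    rw [← sub_le_iff_le_add']
    exact (abs_sub_abs_le_abs_sub m m₀).trans
      (abs_sub_le_iff.2 ⟨by linarith [hm.2], by linarith [hm.1]⟩)
  obtain ⟨M, hnear⟩ := eventually_abs_ray_le (ha.differentiable one_ne_zero _) h0 (|m₀| + η)
  have hdiv : Tendsto (fun δ => (m₀ + η - (m₀ - η)) * Real.log (κ ^ 2 / ((M ^ 2 + 1) * T * δ)))
      (𝓝[>] 0) atTop :=
    (tendsto_log_div_mul_atTop (by positivity) (by positivity)).const_mul_atTop (by linarith)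
  obtain ⟨δ, hlarge, hn, hδ⟩ := ((hdiv.eventually_gt_atTop ((1 + (|m₀| + η) ^ 2) * K)).and
    (hnear.and (Ioo_mem_nhdsGT hT))).exists
  refine hlarge.not_ge ?_
  calc (m₀ + η - (m₀ - η)) * Real.log (κ ^ 2 / ((M ^ 2 + 1) * T * δ))
      ≤ (1 + (|m₀| + η) ^ 2) * integ2 (logGradSq δ a) :=
        log_le_integ2_logGradSq ha hp p q hδ.1 hδ.2.le (by linarith [hx'.2]) (by linarith)
          hwidth hκ hslope hfar fun m hm => hn m (hslope m hm)
    _ ≤ (1 + (|m₀| + η) ^ 2) * K :=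
        mul_le_mul_of_nonneg_left (hK δ hδ.1) (by positivity)

end LogarithmicGradient

section SchrodingerForm

variable {E F : Type*} [NormedAddCommGroup E] [NormedSpace ℝ E] [NormedAddCommGroup F]
  [NormedSpace ℝ F]

/-- The competitors of the variational problem, with values in an arbitrary normed space so that
real and complex functions are treated alike. -/
structure Admissible (u : ℝ → ℝ → E) : Prop where
  contDiff : ContDiff ℝ ∞ (uncurry u)
  periodic : ∀ x y, u (x + 2 * π) y = u x y ∧ u x (y + 2 * π) = u x y
  symmetric : ∀ x y, u (-x) y = u x y ∧ u x (-y) = u x y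

namespace Admissible

variable {u : ℝ → ℝ → E}

lemma contDiff_one (hu : Admissible u) : ContDiff ℝ 1 (uncurry u) :=
  mod_cast contDiff_infty.1 hu.contDiff 1

lemma differentiable (hu : Admissible u) : Differentiable ℝ (uncurry u) :=
  hu.contDiff_one.differentiable one_ne_zero

lemma const (k : E) : Admissible fun _ _ => k :=
  ⟨contDiff_const, fun _ _ => ⟨rfl, rfl⟩, fun _ _ => ⟨rfl, rfl⟩⟩

lemma prodMk {v : ℝ → ℝ → F} (hu : Admissible u) (hv : Admissible v) :
    Admissible fun x y => (u x y, v x y) where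
  contDiff := hu.contDiff.prodMk hv.contDiff
  periodic x y := by
    simp only [(hu.periodic x y).1, (hu.periodic x y).2, (hv.periodic x y).1, (hv.periodic x y).2,
      and_self]
  symmetric x y := by
    simp only [(hu.symmetric x y).1, (hu.symmetric x y).2, (hv.symmetric x y).1,
      (hv.symmetric x y).2, and_self]

lemma comp (hu : Admissible u) {g : E → F} (hg : ContDiff ℝ ∞ g) :
    Admissible fun x y => g (u x y) where
  contDiff := hg.comp hu.contDiff
  periodic x y := by simp only [(hu.periodic x y).1, (hu.periodic x y).2, and_self]
  symmetric x y := by simp only [(hu.symmetric x y).1, (hu.symmetric x y).2, and_self]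

lemma swap (hu : Admissible u) : Admissible fun x y => u y x :=
  ⟨contDiff_uncurry_swap hu.contDiff, fun x y => (hu.periodic y x).symm,
    fun x y => (hu.symmetric y x).symm⟩

variable {a b : ℝ → ℝ → ℝ}

lemma dblPeriodic (ha : Admissible a) : DblPeriodic a := ha.periodic

lemma add (ha : Admissible a) (hb : Admissible b) : Admissible fun x y => a x y + b x y :=
  (ha.prodMk hb).comp contDiff_add

lemma mul (ha : Admissible a) (hb : Admissible b) : Admissible fun x y => a x y * b x y :=
  (ha.prodMk hb).comp contDiff_mul

lemma sub (ha : Admissible a) (hb : Admissible b) : Admissible fun x y => a x y - b x y :=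
  (ha.prodMk hb).comp (contDiff_fst.sub contDiff_snd)

lemma dx_dx (ha : Admissible a) : Admissible (dx (dx a)) where
  contDiff := contDiff_dx (contDiff_dx (m := ∞) ha.contDiff (by simp)) (by simp)
  periodic := ha.dblPeriodic.dx.dx
  symmetric x y := by
    have hodd (x y : ℝ) : dx a (-x) y = -dx a x y := by
      simpa only [dx, (ha.symmetric _ _).1, neg_neg] using
        (congrArg Neg.neg (deriv_comp_neg (fun s => a s y) x)).symm
    refine ⟨?_, by simp only [dx, (ha.symmetric _ _).2]⟩
    change deriv (fun s => dx a s y) (-x) = deriv (fun s => dx a s y) x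
    have h := deriv_comp_neg (fun s => dx a s y) x
    simpa only [hodd, deriv.fun_neg, neg_inj] using h.symm

lemma lap (ha : Admissible a) : Admissible (lap a) := ha.dx_dx.add ha.swap.dx_dx.swap

end Admissible

/-- The quadratic form `∫ |∇u|² + W |u|²` of the Schrödinger operator `-Δ + W`. -/
def schrodingerForm (W : ℝ → ℝ → ℝ) (u : ℝ → ℝ → E) : ℝ :=
  integ2 fun x y => ‖dx u x y‖ ^ 2 + ‖dy u x y‖ ^ 2 + W x y * ‖u x y‖ ^ 2

/-- The bilinear form polarizing `schrodingerForm W` on real functions. -/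
def schrodingerBilin (W a v : ℝ → ℝ → ℝ) : ℝ :=
  integ2 fun x y => dx a x y * dx v x y + dy a x y * dy v x y + W x y * (a x y * v x y)

variable {W a v : ℝ → ℝ → ℝ}

lemma schrodingerForm_const_mul (W : ℝ → ℝ → ℝ) (z : ℂ) (u : ℝ → ℝ → ℂ) :
    schrodingerForm W (fun x y => z * u x y) = ‖z‖ ^ 2 * schrodingerForm W u := by
  rw [schrodingerForm, schrodingerForm, ← integ2_const_mul]
  congr! 3 with x y
  simp only [dx, dy, deriv_const_mul_field, norm_mul]
  ring

lemma schrodingerForm_ofReal (W : ℝ → ℝ → ℝ) (ha : Differentiable ℝ (uncurry a)) :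
    schrodingerForm W (fun x y => (a x y : ℂ)) = schrodingerForm W a := by
  rw [schrodingerForm, schrodingerForm]
  congr! 3 with x y
  have hx : dx (fun x y => (a x y : ℂ)) x y = dx a x y := (hasDerivAt_dx ha x y).ofReal_comp.deriv
  have hy : dy (fun x y => (a x y : ℂ)) x y = dy a x y := (hasDerivAt_dy ha x y).ofReal_comp.deriv
  simp only [hx, hy, Complex.norm_real]

lemma schrodingerForm_re_add_im {u : ℝ → ℝ → ℂ} (hW : Continuous (uncurry W))
    (hu : ContDiff ℝ 1 (uncurry u)) :
    schrodingerForm W (fun x y => (u x y).re) + schrodingerForm W (fun x y => (u x y).im) =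
      schrodingerForm W u := by
  have hre : ContDiff ℝ 1 (uncurry fun x y => (u x y).re) := reCLM.contDiff.comp hu
  have him : ContDiff ℝ 1 (uncurry fun x y => (u x y).im) := imCLM.contDiff.comp hu
  have hd := hu.differentiable one_ne_zero
  have hsq (z : ℂ) : ‖z‖ ^ 2 = ‖z.re‖ ^ 2 + ‖z.im‖ ^ 2 := by
    rw [Complex.sq_norm, Complex.normSq_apply, Real.norm_eq_abs, Real.norm_eq_abs, sq_abs, sq_abs,
      sq, sq]
  rw [schrodingerForm, schrodingerForm, schrodingerForm, ← integ2_add (by fun_prop) (by fun_prop)]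
  congr! 3 with x y
  have hx := hasDerivAt_dx hd x y
  have hy := hasDerivAt_dy hd x y
  have rex : dx (fun x y => (u x y).re) x y = (dx u x y).re :=
    (reCLM.hasFDerivAt.comp_hasDerivAt x hx).deriv
  have imx : dx (fun x y => (u x y).im) x y = (dx u x y).im :=
    (imCLM.hasFDerivAt.comp_hasDerivAt x hx).deriv
  have rey : dy (fun x y => (u x y).re) x y = (dy u x y).re :=
    (reCLM.hasFDerivAt.comp_hasDerivAt y hy).deriv
  have imy : dy (fun x y => (u x y).im) x y = (dy u x y).im :=
    (imCLM.hasFDerivAt.comp_hasDerivAt y hy).deriv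
  rw [hsq (dx u x y), hsq (dy u x y), hsq (u x y), rex, imx, rey, imy]
  ring

lemma schrodingerForm_add_const_mul (hW : Continuous (uncurry W)) (ha : ContDiff ℝ 1 (uncurry a))
    (hv : ContDiff ℝ 1 (uncurry v)) (t : ℝ) :
    schrodingerForm W (fun x y => a x y + t * v x y) =
      schrodingerForm W a + 2 * t * schrodingerBilin W a v + t ^ 2 * schrodingerForm W v := by
  have hda := ha.differentiable one_ne_zero
  have hdv := hv.differentiable one_ne_zero
  simp only [schrodingerForm, schrodingerBilin]
  rw [← integ2_const_mul, ← integ2_const_mul, ← integ2_add (by fun_prop) (by fun_prop),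
    ← integ2_add (by fun_prop) (by fun_prop)]
  congr! 3 with x y
  have hx : dx (fun x y => a x y + t * v x y) x y = dx a x y + t * dx v x y :=
    ((hasDerivAt_dx hda x y).add ((hasDerivAt_dx hdv x y).const_mul t)).deriv
  have hy : dy (fun x y => a x y + t * v x y) x y = dy a x y + t * dy v x y :=
    ((hasDerivAt_dy hda x y).add ((hasDerivAt_dy hdv x y).const_mul t)).deriv
  simp only [hx, hy, Real.norm_eq_abs, sq_abs]
  ring

lemma schrodingerBilin_eq_integ2 (hW : Continuous (uncurry W)) (ha : ContDiff ℝ 2 (uncurry a))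
    (hap : DblPeriodic a) (hv : ContDiff ℝ 1 (uncurry v)) (hvp : DblPeriodic v) :
    schrodingerBilin W a v = integ2 fun x y => (W x y * a x y - lap a x y) * v x y := by
  set X : ℝ → ℝ → ℝ := fun x y => dx a x y * v x y
  set Y : ℝ → ℝ → ℝ := fun x y => dy a x y * v x y
  have hax : ContDiff ℝ 1 (uncurry (dx a)) := contDiff_dx ha (by norm_num)
  have hay : ContDiff ℝ 1 (uncurry (dy a)) := contDiff_dy ha (by norm_num)
  have hX : ContDiff ℝ 1 (uncurry X) := hax.mul hv
  have hY : ContDiff ℝ 1 (uncurry Y) := hay.mul hv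
  have hXp : DblPeriodic X := fun x y => by
    simp only [X, (hap.dx x y).1, (hap.dx x y).2, (hvp x y).1, (hvp x y).2, and_self]
  have hYp : DblPeriodic Y := fun x y => by
    simp only [Y, (hap.dy x y).1, (hap.dy x y).2, (hvp x y).1, (hvp x y).2, and_self]
  have hlap : Continuous (uncurry (lap a)) :=
    show Continuous (uncurry fun x y => dx (dx a) x y + dy (dy a) x y) by fun_prop
  calc schrodingerBilin W a v
      = integ2 fun x y => dx X x y + dy Y x y + (W x y * a x y - lap a x y) * v x y := by
        rw [schrodingerBilin]
        congr! 3 with x y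
        have hdv := hv.differentiable one_ne_zero
        have eX : dx X x y = dx (dx a) x y * v x y + dx a x y * dx v x y :=
          ((hasDerivAt_dx (hax.differentiable one_ne_zero) x y).mul (hasDerivAt_dx hdv x y)).deriv
        have eY : dy Y x y = dy (dy a) x y * v x y + dy a x y * dy v x y :=
          ((hasDerivAt_dy (hay.differentiable one_ne_zero) x y).mul (hasDerivAt_dy hdv x y)).deriv
        have eL : lap a x y = dx (dx a) x y + dy (dy a) x y := rfl
        rw [eX, eY, eL]
        ring
    _ = integ2 fun x y => (W x y * a x y - lap a x y) * v x y := by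
        rw [integ2_add (by fun_prop) (by fun_prop), integ2_add (by fun_prop) (by fun_prop),
          integ2_dx hX hXp, integ2_dy hY hYp, zero_add, zero_add]

end SchrodingerForm

section GroundStates

variable {W a v : ℝ → ℝ → ℝ}

lemma schrodingerBilin_eq_zero (hW : Continuous (uncurry W))
    (hQ : ∀ u : ℝ → ℝ → ℝ, Admissible u → 0 ≤ schrodingerForm W u) (ha : Admissible a)
    (ha0 : schrodingerForm W a = 0) (hv : Admissible v) : schrodingerBilin W a v = 0 := by
  have hline (t : ℝ) :
      0 ≤ schrodingerForm W v * (t * t) + 2 * schrodingerBilin W a v * t + 0 := by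
    have h := hQ _ (ha.add ((Admissible.const t).mul hv))
    rw [schrodingerForm_add_const_mul hW ha.contDiff_one hv.contDiff_one, ha0] at h
    linarith
  have hdiscrim := discrim_le_zero hline
  rw [discrim] at hdiscrim
  nlinarith

/-- A zero of the nonnegative form is a critical point of it, hence solves `-Δa + W a = 0`. -/
lemma lap_eq_of_schrodingerForm_eq_zero (hW : Admissible W)
    (hQ : ∀ u : ℝ → ℝ → ℝ, Admissible u → 0 ≤ schrodingerForm W u) (ha : Admissible a)
    (ha0 : schrodingerForm W a = 0) (x y : ℝ) : lap a x y = W x y * a x y := by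
  have hres := (hW.mul ha).sub ha.lap
  have hzero :
      integ2 (fun x y => (W x y * a x y - lap a x y) * (W x y * a x y - lap a x y)) = 0 := by
    rw [← schrodingerBilin_eq_integ2 hW.contDiff_one.continuous
      (mod_cast contDiff_infty.1 ha.contDiff 2) ha.dblPeriodic hres.contDiff_one hres.dblPeriodic]
    exact schrodingerBilin_eq_zero hW.contDiff_one.continuous hQ ha ha0 hres
  have hsq := hres.mul hres
  have h := hsq.dblPeriodic.eq_zero_of_integ2_eq_zero hsq.contDiff_one.continuous
    (fun _ _ => mul_self_nonneg _) hzero x y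
  linarith [mul_self_eq_zero.1 h]

lemma hasDerivAt_sqrt_sq_add_sq {g : ℝ → ℝ} {g' t ε : ℝ} (hg : HasDerivAt g g' t) (hε : ε ≠ 0) :
    HasDerivAt (fun s => √(g s ^ 2 + ε ^ 2)) (g t * g' / √(g t ^ 2 + ε ^ 2)) t := by
  have hpos : 0 < g t ^ 2 + ε ^ 2 := by positivity
  refine (((hg.pow 2).add_const (ε ^ 2)).sqrt hpos.ne').congr_deriv ?_
  simp only [Pi.pow_apply, Nat.cast_ofNat, Nat.add_one_sub_one, pow_one, mul_assoc]
  exact mul_div_mul_left _ _ two_ne_zero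

/-- The competitor `√(a² + ε²)` has form `ε² ∫ (W - |∇a|² / (a² + ε²))` if `a` is a zero. -/
lemma integ2_logGradSq_le (hW : Continuous (uncurry W))
    (hQ : ∀ u : ℝ → ℝ → ℝ, Admissible u → 0 ≤ schrodingerForm W u) (ha : Admissible a)
    (ha0 : schrodingerForm W a = 0) {ε : ℝ} (hε : 0 < ε) :
    integ2 (logGradSq ε a) ≤ integ2 W := by
  have hpos (s : ℝ) : 0 < s ^ 2 + ε ^ 2 := by positivity
  have ha1 := ha.contDiff_one
  have hc := continuous_logGradSq ha1 hε.ne'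
  have hsqrt : Admissible fun x y => √(a x y ^ 2 + ε ^ 2) :=
    ha.comp (g := fun s => √(s ^ 2 + ε ^ 2)) <|
      ((contDiff_id.pow 2).add contDiff_const).sqrt fun s => (hpos s).ne'
  have hform : schrodingerForm W (fun x y => √(a x y ^ 2 + ε ^ 2)) =
      schrodingerForm W a + ε ^ 2 * (integ2 W - integ2 (logGradSq ε a)) := by
    rw [← integ2_sub hW hc, ← integ2_const_mul, schrodingerForm, schrodingerForm,
      ← integ2_add (by fun_prop) (by fun_prop)]
    congr! 3 with x y
    have hx : dx (fun x y => √(a x y ^ 2 + ε ^ 2)) x y = a x y * dx a x y / √(a x y ^ 2 + ε ^ 2) :=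
      (hasDerivAt_sqrt_sq_add_sq (hasDerivAt_dx ha.differentiable x y) hε.ne').deriv
    have hy : dy (fun x y => √(a x y ^ 2 + ε ^ 2)) x y = a x y * dy a x y / √(a x y ^ 2 + ε ^ 2) :=
      (hasDerivAt_sqrt_sq_add_sq (hasDerivAt_dy ha.differentiable x y) hε.ne').deriv
    have hs := (hpos (a x y)).ne'
    simp only [Real.norm_eq_abs, sq_abs, hx, hy, div_pow, mul_pow, Real.sq_sqrt (hpos _).le,
      logGradSq]
    field_simp
    ring
  have hnonneg := hQ _ hsqrt
  rw [hform, ha0, zero_add] at hnonneg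
  exact sub_nonneg.1 (nonneg_of_mul_nonneg_right hnonneg (by positivity))

theorem eq_zero_of_schrodingerForm_eq_zero (hW : Continuous (uncurry W))
    (hQ : ∀ u : ℝ → ℝ → ℝ, Admissible u → 0 ≤ schrodingerForm W u) (ha : Admissible a)
    (ha0 : schrodingerForm W a = 0) {p q : ℝ} (h0 : a p q = 0) (x y : ℝ) : a x y = 0 :=
  eq_zero_of_integ2_logGradSq_le ha.contDiff_one ha.dblPeriodic
    (fun _ hε => integ2_logGradSq_le hW hQ ha ha0 hε) h0 x y

end GroundStates

section Minimizers

/-- The constraint functional `∫ |u|³`. -/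
def cubicMass (u : ℝ → ℝ → ℂ) : ℝ := integ2 fun x y => ‖u x y‖ ^ 3

/-- A minimizer of `BcC c` among the admissible functions with the same, positive, cubic mass. -/
structure IsMinimizer (c : ℝ) (Ψ : ℝ → ℝ → ℂ) : Prop where
  admissible : Admissible Ψ
  mass_pos : 0 < cubicMass Ψ
  le : ∀ u, Admissible u → cubicMass u = cubicMass Ψ → BcC c Ψ ≤ BcC c u

/-- The Lagrange multiplier `C₁` of the constrained problem: testing `-ΔΨ + cΨ = C₁|Ψ|Ψ` against
`Ψ` gives this quotient. -/
def multiplier (c : ℝ) (Ψ : ℝ → ℝ → ℂ) : ℝ := 2 * BcC c Ψ / cubicMass Ψ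

/-- The potential `W = c - C₁|Ψ|`, for which the Euler-Lagrange equation reads `-ΔΨ + WΨ = 0`. -/
def potential (c : ℝ) (Ψ : ℝ → ℝ → ℂ) (x y : ℝ) : ℝ := c - multiplier c Ψ * ‖Ψ x y‖

lemma two_mul_BcC (c : ℝ) (u : ℝ → ℝ → ℂ) : 2 * BcC c u = schrodingerForm (fun _ _ => c) u := by
  rw [BcC, ← mul_assoc, mul_one_div_cancel two_ne_zero, one_mul]
  rfl

lemma BcC_const_mul (c : ℝ) (z : ℂ) (u : ℝ → ℝ → ℂ) :
    BcC c (fun x y => z * u x y) = ‖z‖ ^ 2 * BcC c u := by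
  have h := schrodingerForm_const_mul (fun _ _ => c) z u
  rw [← two_mul_BcC, ← two_mul_BcC] at h
  linarith

lemma cubicMass_const_mul (z : ℂ) (u : ℝ → ℝ → ℂ) :
    cubicMass (fun x y => z * u x y) = ‖z‖ ^ 3 * cubicMass u := by
  simp only [cubicMass, norm_mul, mul_pow, integ2_const_mul]

lemma Admissible.const_mul {u : ℝ → ℝ → ℂ} (hu : Admissible u) (z : ℂ) :
    Admissible fun x y => z * u x y :=
  hu.comp (contDiff_const.mul contDiff_id)

lemma Admissible.eq_zero_of_integ2_norm_pow_eq_zero {E : Type*} [NormedAddCommGroup E]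
    [NormedSpace ℝ E] {u : ℝ → ℝ → E} (hu : Admissible u) {n : ℕ}
    (h : integ2 (fun x y => ‖u x y‖ ^ n) = 0) (x y : ℝ) : u x y = 0 := by
  have hp : DblPeriodic fun x y => ‖u x y‖ ^ n := fun x y => by
    simp only [(hu.periodic x y).1, (hu.periodic x y).2, and_self]
  have hc : Continuous (uncurry fun x y => ‖u x y‖ ^ n) := hu.contDiff.continuous.norm.pow n
  exact norm_eq_zero.1 <| eq_zero_of_pow_eq_zero <|
    hp.eq_zero_of_integ2_eq_zero hc (fun _ _ => by positivity) h x y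

lemma integ2_mul_sq_le {V w : ℝ → ℝ → ℝ} (hVc : Continuous (uncurry V))
    (hwc : Continuous (uncurry w)) (hV : ∀ x y, 0 ≤ V x y) (hw : ∀ x y, 0 ≤ w x y) :
    integ2 (fun x y => V x y * w x y ^ 2) ≤
      1 / 3 * integ2 (fun x y => V x y ^ 3) + 2 / 3 * integ2 (fun x y => w x y ^ 3) := by
  have young (x y : ℝ) : V x y * w x y ^ 2 ≤ 1 / 3 * V x y ^ 3 + 2 / 3 * w x y ^ 3 := by
    nlinarith [mul_nonneg (sq_nonneg (V x y - w x y))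
      (add_nonneg (hV x y) (mul_nonneg zero_le_two (hw x y)))]
  rw [← integ2_const_mul, ← integ2_const_mul, ← integ2_add (by fun_prop) (by fun_prop)]
  exact integ2_mono (by fun_prop) (by fun_prop) young

lemma schrodingerForm_potential {c : ℝ} {Ψ u : ℝ → ℝ → ℂ} (hΨ : Continuous (uncurry Ψ))
    (hu : ContDiff ℝ 1 (uncurry u)) :
    schrodingerForm (potential c Ψ) u =
      2 * BcC c u - multiplier c Ψ * integ2 fun x y => ‖Ψ x y‖ * ‖u x y‖ ^ 2 := by
  rw [two_mul_BcC, ← integ2_const_mul, schrodingerForm, schrodingerForm,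
    ← integ2_sub (by fun_prop) (by fun_prop)]
  congr! 3 with x y
  rw [potential]
  ring

namespace IsMinimizer

variable {c : ℝ} {Ψ : ℝ → ℝ → ℂ}

lemma const_mul (hΨ : IsMinimizer c Ψ) {z : ℂ} (hz : ‖z‖ = 1) :
    IsMinimizer c fun x y => z * Ψ x y := by
  have hmass : cubicMass (fun x y => z * Ψ x y) = cubicMass Ψ := by
    rw [cubicMass_const_mul, hz, one_pow, one_mul]
  refine ⟨hΨ.admissible.const_mul z, hmass.symm ▸ hΨ.mass_pos, fun u hu hum => ?_⟩
  rw [BcC_const_mul, hz, one_pow, one_mul]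
  exact hΨ.le u hu (hum.trans hmass)

lemma continuous_potential (hΨ : IsMinimizer c Ψ) : Continuous (uncurry (potential c Ψ)) := by
  have := hΨ.admissible.contDiff.continuous
  unfold potential
  fun_prop

lemma exists_ne_zero (hΨ : IsMinimizer c Ψ) : ∃ x y, Ψ x y ≠ 0 := by
  by_contra! h
  simpa [cubicMass, h, integ2] using hΨ.mass_pos

lemma multiplier_pos (hΨ : IsMinimizer c Ψ) (hc : 0 < c) : 0 < multiplier c Ψ := by
  refine div_pos ?_ hΨ.mass_pos
  have hcont := hΨ.admissible.contDiff_one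
  have hsq : 0 < integ2 fun x y => ‖Ψ x y‖ ^ 2 := by
    refine (integ2_nonneg fun _ _ => by positivity).lt_of_ne' fun h => ?_
    obtain ⟨x, y, hne⟩ := hΨ.exists_ne_zero
    exact hne (hΨ.admissible.eq_zero_of_integ2_norm_pow_eq_zero h x y)
  calc 0 < c * integ2 fun x y => ‖Ψ x y‖ ^ 2 := mul_pos hc hsq
    _ = integ2 fun x y => c * ‖Ψ x y‖ ^ 2 := (integ2_const_mul _ _).symm
    _ ≤ schrodingerForm (fun _ _ => c) Ψ :=
        integ2_mono (by fun_prop) (by fun_prop) fun x y => le_add_of_nonneg_left (by positivity)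
    _ = 2 * BcC c Ψ := (two_mul_BcC c Ψ).symm

lemma multiplier_mul_cubicMass (hΨ : IsMinimizer c Ψ) :
    multiplier c Ψ * cubicMass Ψ = 2 * BcC c Ψ :=
  div_mul_cancel₀ _ hΨ.mass_pos.ne'

lemma schrodingerForm_potential_self (hΨ : IsMinimizer c Ψ) :
    schrodingerForm (potential c Ψ) Ψ = 0 := by
  rw [schrodingerForm_potential hΨ.admissible.contDiff.continuous hΨ.admissible.contDiff_one,
    ← hΨ.multiplier_mul_cubicMass, cubicMass]
  simp only [← pow_succ', Nat.reduceAdd, sub_self]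

lemma schrodingerForm_potential_nonneg_of_cubicMass_eq (hΨ : IsMinimizer c Ψ) (hc : 0 < c)
    {u : ℝ → ℝ → ℂ} (hu : Admissible u) (hum : cubicMass u = cubicMass Ψ) :
    0 ≤ schrodingerForm (potential c Ψ) u := by
  have hΨc := hΨ.admissible.contDiff.continuous
  have huc := hu.contDiff.continuous
  have young : integ2 (fun x y => ‖Ψ x y‖ * ‖u x y‖ ^ 2) ≤ cubicMass Ψ :=
    calc integ2 (fun x y => ‖Ψ x y‖ * ‖u x y‖ ^ 2)
        ≤ 1 / 3 * cubicMass Ψ + 2 / 3 * cubicMass u :=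
          integ2_mul_sq_le (by fun_prop) (by fun_prop) (fun _ _ => norm_nonneg _)
            fun _ _ => norm_nonneg _
      _ = cubicMass Ψ := by rw [hum]; ring
  rw [schrodingerForm_potential hΨc hu.contDiff_one, sub_nonneg]
  calc multiplier c Ψ * integ2 (fun x y => ‖Ψ x y‖ * ‖u x y‖ ^ 2)
      ≤ multiplier c Ψ * cubicMass Ψ := mul_le_mul_of_nonneg_left young (hΨ.multiplier_pos hc).le
    _ = 2 * BcC c Ψ := hΨ.multiplier_mul_cubicMass
    _ ≤ 2 * BcC c u := mul_le_mul_of_nonneg_left (hΨ.le u hu hum) zero_le_two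

lemma schrodingerForm_potential_nonneg (hΨ : IsMinimizer c Ψ) (hc : 0 < c) {u : ℝ → ℝ → ℂ}
    (hu : Admissible u) : 0 ≤ schrodingerForm (potential c Ψ) u := by
  have hmass : 0 ≤ cubicMass u := integ2_nonneg fun _ _ => by positivity
  rcases hmass.eq_or_lt' with h0 | hpos
  · have hu0 : u = fun x y => 0 * u x y := by
      funext x y
      rw [hu.eq_zero_of_integ2_norm_pow_eq_zero h0 x y, mul_zero]
    rw [hu0, schrodingerForm_const_mul, norm_zero]
    simp
  · have hratio : 0 < cubicMass Ψ / cubicMass u := div_pos hΨ.mass_pos hpos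
    obtain ⟨t, ht, ht3⟩ : ∃ t > 0, t ^ 3 = cubicMass Ψ / cubicMass u :=
      ⟨(cubicMass Ψ / cubicMass u) ^ ((3 : ℕ)⁻¹ : ℝ), by positivity,
        Real.rpow_inv_natCast_pow hratio.le three_ne_zero⟩
    have hscaled := hΨ.schrodingerForm_potential_nonneg_of_cubicMass_eq hc (hu.const_mul t) <| by
      rw [cubicMass_const_mul, Complex.norm_of_nonneg ht.le, ht3, div_mul_cancel₀ _ hpos.ne']
    rw [schrodingerForm_const_mul, Complex.norm_of_nonneg ht.le] at hscaled
    exact nonneg_of_mul_nonneg_right hscaled (by positivity)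

lemma schrodingerForm_potential_nonneg_real (hΨ : IsMinimizer c Ψ) (hc : 0 < c) (a : ℝ → ℝ → ℝ)
    (ha : Admissible a) : 0 ≤ schrodingerForm (potential c Ψ) a := by
  rw [← schrodingerForm_ofReal _ ha.differentiable]
  exact hΨ.schrodingerForm_potential_nonneg hc (ha.comp ofRealCLM.contDiff)

lemma admissible_re (hΨ : IsMinimizer c Ψ) : Admissible fun x y => (Ψ x y).re :=
  hΨ.admissible.comp reCLM.contDiff

lemma admissible_im (hΨ : IsMinimizer c Ψ) : Admissible fun x y => (Ψ x y).im :=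
  hΨ.admissible.comp imCLM.contDiff

lemma schrodingerForm_re_eq_zero_and_im_eq_zero (hΨ : IsMinimizer c Ψ) (hc : 0 < c) :
    schrodingerForm (potential c Ψ) (fun x y => (Ψ x y).re) = 0 ∧
      schrodingerForm (potential c Ψ) (fun x y => (Ψ x y).im) = 0 := by
  rw [← add_eq_zero_iff_of_nonneg (hΨ.schrodingerForm_potential_nonneg_real hc _ hΨ.admissible_re)
      (hΨ.schrodingerForm_potential_nonneg_real hc _ hΨ.admissible_im),
    schrodingerForm_re_add_im hΨ.continuous_potential hΨ.admissible.contDiff_one,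
    hΨ.schrodingerForm_potential_self]

variable {p q : ℝ}

lemma im_eq_zero (hΨ : IsMinimizer c Ψ) (hc : 0 < c) (him : (Ψ p q).im = 0) (x y : ℝ) :
    (Ψ x y).im = 0 :=
  eq_zero_of_schrodingerForm_eq_zero hΨ.continuous_potential
    (hΨ.schrodingerForm_potential_nonneg_real hc) hΨ.admissible_im
    (hΨ.schrodingerForm_re_eq_zero_and_im_eq_zero hc).2 him x y

lemma re_ne_zero (hΨ : IsMinimizer c Ψ) (hc : 0 < c) (him : (Ψ p q).im = 0) (x y : ℝ) :
    (Ψ x y).re ≠ 0 := fun hre => by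
  obtain ⟨x', y', hne⟩ := hΨ.exists_ne_zero
  exact hne <| Complex.ext
    (eq_zero_of_schrodingerForm_eq_zero hΨ.continuous_potential
      (hΨ.schrodingerForm_potential_nonneg_real hc) hΨ.admissible_re
      (hΨ.schrodingerForm_re_eq_zero_and_im_eq_zero hc).1 hre x' y')
    (hΨ.im_eq_zero hc him x' y')

lemma re_pos (hΨ : IsMinimizer c Ψ) (hc : 0 < c) (him : (Ψ p q).im = 0) (hre : 0 ≤ (Ψ p q).re)
    (x y : ℝ) : 0 < (Ψ x y).re := by
  by_contra! hle
  obtain ⟨r, hr⟩ := mem_range_of_exists_le_of_exists_ge hΨ.admissible_re.contDiff.continuous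
    ⟨(x, y), hle⟩ ⟨(p, q), hre⟩
  exact hΨ.re_ne_zero hc him r.1 r.2 hr

lemma eq_ofReal_re (hΨ : IsMinimizer c Ψ) (hc : 0 < c) (him : (Ψ p q).im = 0) (x y : ℝ) :
    Ψ x y = (Ψ x y).re :=
  Complex.ext rfl (hΨ.im_eq_zero hc him x y)

/-- Positivity makes `|Ψ| = Re Ψ`, and with it the potential, smooth. -/
lemma neg_lap_re_add (hΨ : IsMinimizer c Ψ) (hc : 0 < c) (him : (Ψ p q).im = 0)
    (hre : 0 ≤ (Ψ p q).re) (x y : ℝ) :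
    -lap (fun x y => (Ψ x y).re) x y + c * (Ψ x y).re = multiplier c Ψ * (Ψ x y).re ^ 2 := by
  have hpot (x y : ℝ) : potential c Ψ x y = c - multiplier c Ψ * (Ψ x y).re := by
    rw [potential, hΨ.eq_ofReal_re hc him x y, Complex.norm_of_nonneg (hΨ.re_pos hc him hre x y).le,
      Complex.ofReal_re]
  have hW : Admissible (potential c Ψ) := by
    rw [funext₂ hpot]
    exact (Admissible.const c).sub ((Admissible.const _).mul hΨ.admissible_re)
  rw [lap_eq_of_schrodingerForm_eq_zero hW (hΨ.schrodingerForm_potential_nonneg_real hc)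
    hΨ.admissible_re (hΨ.schrodingerForm_re_eq_zero_and_im_eq_zero hc).1, hpot]
  ring

end IsMinimizer

end Minimizers

/-- A constrained minimizer Ψ of B_c with ∫|Ψ|³ = λ is, up to a constant phase, a positive
real-valued smooth doubly 2π-periodic symmetric solution of −Δφ + cφ = C₁φ². -/
theorem minimizer_is_positive_phase (c : ℝ) (hc : 0 < c) (lam : ℝ) (hlam : 0 < lam)
    (Ψ : ℝ → ℝ → ℂ) (hs : Smooth2C Ψ) (hper : DblPeriodicC Ψ) (hsym : SymFunC Ψ)
    (hcon : integ2 (fun x y => ‖Ψ x y‖^3) = lam)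
    (hmin : ∀ u : ℝ → ℝ → ℂ,
      Smooth2C u → DblPeriodicC u → SymFunC u →
      integ2 (fun x y => ‖u x y‖^3) = lam → BcC c Ψ ≤ BcC c u) :
    ∃ (C₁ : ℝ) (θ : ℝ) (φ : ℝ → ℝ → ℝ),
      0 < C₁ ∧
      Smooth2 φ ∧ DblPeriodic φ ∧ SymFun φ ∧ (∀ x y : ℝ, 0 < φ x y) ∧
      (∀ x y : ℝ, Ψ x y = Complex.exp (θ * Complex.I) * (φ x y : ℂ)) ∧
      (∀ x y : ℝ, -(lap φ x y) + c * φ x y = C₁ * (φ x y)^2) := by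
  have hΨ : IsMinimizer c Ψ :=
    ⟨⟨hs, hper, hsym⟩, hlam.trans_eq hcon.symm, fun u hu hum =>
      hmin u hu.contDiff hu.periodic hu.symmetric (hum.trans hcon)⟩
  set θ := arg (Ψ 0 0)
  set Φ : ℝ → ℝ → ℂ := fun x y => Complex.exp (-(θ * Complex.I)) * Ψ x y
  have hΨΦ (x y : ℝ) : Ψ x y = Complex.exp (θ * Complex.I) * Φ x y := by
    rw [← mul_assoc, ← Complex.exp_add, add_neg_cancel, Complex.exp_zero, one_mul]
  have hΦ : IsMinimizer c Φ := hΨ.const_mul <| by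
    rw [Complex.exp_neg, norm_inv, Complex.norm_exp_ofReal_mul_I, inv_one]
  have hΦ0 : Φ 0 0 = ‖Ψ 0 0‖ := mul_left_cancel₀ (Complex.exp_ne_zero (θ * Complex.I)) <| by
    rw [← hΨΦ, mul_comm, Complex.norm_mul_exp_arg_mul_I]
  have him : (Φ 0 0).im = 0 := by rw [hΦ0, Complex.ofReal_im]
  have hre : 0 ≤ (Φ 0 0).re := by rw [hΦ0, Complex.ofReal_re]; exact norm_nonneg _
  have hφ := hΦ.admissible_re
  exact ⟨multiplier c Φ, θ, fun x y => (Φ x y).re, hΦ.multiplier_pos hc, hφ.contDiff,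
    hφ.periodic, hφ.symmetric, hΦ.re_pos hc him hre,
    fun x y => (hΨΦ x y).trans (congrArg _ (hΦ.eq_ofReal_re hc him x y)),
    hΦ.neg_lap_re_add hc him hre⟩
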